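/- Consider the 15 multilinear degree-4 monomials in the product of M: m₁ = [[[a,b],c],d], m₂ = [[[a,b],d],c], m₃ = [[[a,c],b],d], m₄ = [[[a,c],d],b], m₅ = [[[a,d],b],c], m₆ = [[[a,d],c],b], m₇ = [[[b,c],a],d], m₈ = [[[b,c],d],a], m₉ = [[[b,d],a],c], m₁₀ = [[[b,d],c],a], m₁₁ = [[[c,d],a],b], m₁₂ = [[[c,d],b],a], m₁₃ = [[a,b],[c,d]], m₁₄ = [[a,c],[b,d]], m₁₅ = [[a,d],[b,c]], each viewed as a function of (a,b,c,d) ∈ M⁴. The subspace of coefficient vectors (λ₁,…,λ₁₅) ∈ ℂ¹⁵ such that Σ λⱼ mⱼ(a,b,c,d) = 0 for all a, b, c, d ∈ M has dimension 5, and it is spanned by the coefficient vectors of the polynomials m(σ(a),σ(b),σ(c),σ(d)) for permutations σ of {a,b,c,d}, where m(a,b,c,d) = −[[[a,b],c],d] + [[[a,d],b],c] − [[[b,c],d],a] − [[[c,d],a],b] + [[a,c],[b,d]] (a linearization of the Malcev identity). -/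

import Mathlib

/-!
The product of `M` is, up to scaling, the cross product on the traceless octonions: there is a
symmetric bilinear form `B` (`bform`), invariant in the sense `B([x,y],z) = B(x,[y,z])`, such that
`[[x,y],y] = B(y,y) x - B(x,y) y`. The linearization of this cubic identity (`br_br_add`) is a
polynomial identity small enough to be checked coordinatewise. The linearized Malcev identity
(`malcev`) is then a formal consequence of it: a linear combination of its substitution instances
and of its products with a fourth variable, in which the terms containing `B` cancel by invariance.
This puts every vector `gens17 i` in the kernel of `Phi17`.

Conversely, evaluating a vanishing combination of the monomials on ten quadruples of basis vectors
of `M` gives ten independent linear equations on the fifteen coefficients. Solving them expresses a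
kernel vector as an explicit combination of the first five vectors `gens17 0, …, gens17 4`
(`eq_comb_of_mem_ker`). These five are linearly independent, so the kernel is their span, and it
has dimension 5.
-/

noncomputable section

/-- The 7-dimensional complex vector space `M` with basis
`v₆, v₄, v₂, v₀, v₋₂, v₋₄, v₋₆` (coordinates indexed by `Fin 7` in this order). -/
abbrev M7 : Type := Fin 7 → ℂ

/-- The 2×2 minor `x_p y_q - x_q y_p`. -/
def dd (x y : M7) (p q : Fin 7) : ℂ := x p * y q - x q * y p

/-- The anticommutative bilinear product `[·,·]` on `M` determined by
`[v₆,v₀] = 20v₆`, `[v₆,v₋₂] = 10v₄`, `[v₆,v₋₄] = 4v₂`, `[v₆,v₋₆] = v₀`,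
`[v₄,v₂] = −60v₆`, `[v₄,v₀] = −20v₄`, `[v₄,v₋₄] = 6v₀`, `[v₄,v₋₆] = 4v₋₂`,
`[v₂,v₀] = −20v₂`, `[v₂,v₋₂] = −15v₀`, `[v₂,v₋₆] = 10v₋₄`,
`[v₀,v₋₂] = −20v₋₂`, `[v₀,v₋₄] = −20v₋₄`, `[v₀,v₋₆] = 20v₋₆`,
`[v₋₂,v₋₄] = −60v₋₆`, all other products of basis vectors `v_p, v_q` with `p > q` being zero. -/
def br (x y : M7) : M7 :=
  ![20 * dd x y 0 3 - 60 * dd x y 1 2,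
    10 * dd x y 0 4 - 20 * dd x y 1 3,
    4 * dd x y 0 5 - 20 * dd x y 2 3,
    dd x y 0 6 + 6 * dd x y 1 5 - 15 * dd x y 2 4,
    4 * dd x y 1 6 - 20 * dd x y 3 4,
    10 * dd x y 2 6 - 20 * dd x y 3 5,
    20 * dd x y 3 6 - 60 * dd x y 4 5]

/-- The 15 multilinear degree-4 monomials `m₁, …, m₁₅` in the product of `M`,
each viewed as a function of `(a,b,c,d) ∈ M⁴`. -/
def mono17 : Fin 15 → (M7 → M7 → M7 → M7 → M7) :=
  ![fun a b c d => br (br (br a b) c) d,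
    fun a b c d => br (br (br a b) d) c,
    fun a b c d => br (br (br a c) b) d,
    fun a b c d => br (br (br a c) d) b,
    fun a b c d => br (br (br a d) b) c,
    fun a b c d => br (br (br a d) c) b,
    fun a b c d => br (br (br b c) a) d,
    fun a b c d => br (br (br b c) d) a,
    fun a b c d => br (br (br b d) a) c,
    fun a b c d => br (br (br b d) c) a,
    fun a b c d => br (br (br c d) a) b,
    fun a b c d => br (br (br c d) b) a,
    fun a b c d => br (br a b) (br c d),
    fun a b c d => br (br a c) (br b d),
    fun a b c d => br (br a d) (br b c)]

/-- The linear map sending a coefficient vector `λ ∈ ℂ¹⁵` to the multilinear function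
`(a,b,c,d) ↦ Σ_j λ_j m_j(a,b,c,d)`. -/
def Phi17 : (Fin 15 → ℂ) →ₗ[ℂ] (M7 → M7 → M7 → M7 → M7) :=
  ∑ j : Fin 15, (LinearMap.proj j : (Fin 15 → ℂ) →ₗ[ℂ] ℂ).smulRight (mono17 j)

/-- The coefficient vectors (in normal form with respect to anticommutativity) of the
24 permutations `m(σa, σb, σc, σd)` of the linearized Malcev identity
`m(a,b,c,d) = −[[[a,b],c],d] + [[[a,d],b],c] − [[[b,c],d],a] − [[[c,d],a],b] + [[a,c],[b,d]]`. -/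
def gens17 : Fin 24 → (Fin 15 → ℂ) :=
  ![![(-1 : ℂ), 0, 0, 0, 1, 0, 0, (-1 : ℂ), 0, 0, (-1 : ℂ), 0, 0, 1, 0],
    ![0, (-1 : ℂ), 1, 0, 0, 0, 0, 0, 0, (-1 : ℂ), 1, 0, 0, 0, 1],
    ![0, 0, (-1 : ℂ), 0, 0, 1, 0, 1, (-1 : ℂ), 0, 0, 0, 1, 0, 0],
    ![1, 0, 0, (-1 : ℂ), 0, 0, 0, 0, 1, 0, 0, (-1 : ℂ), 0, 0, (-1 : ℂ)],
    ![0, 0, 0, 1, (-1 : ℂ), 0, (-1 : ℂ), 0, 0, 1, 0, 0, (-1 : ℂ), 0, 0],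
    ![0, 1, 0, 0, 0, (-1 : ℂ), 1, 0, 0, 0, 0, 1, 0, (-1 : ℂ), 0],
    ![1, 0, 0, (-1 : ℂ), 0, 0, 0, 0, 1, 0, 0, (-1 : ℂ), 0, 0, (-1 : ℂ)],
    ![0, 1, 0, 0, 0, (-1 : ℂ), 1, 0, 0, 0, 0, 1, 0, (-1 : ℂ), 0],
    ![0, 0, 0, 1, (-1 : ℂ), 0, (-1 : ℂ), 0, 0, 1, 0, 0, (-1 : ℂ), 0, 0],
    ![(-1 : ℂ), 0, 0, 0, 1, 0, 0, (-1 : ℂ), 0, 0, (-1 : ℂ), 0, 0, 1, 0],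
    ![0, 0, (-1 : ℂ), 0, 0, 1, 0, 1, (-1 : ℂ), 0, 0, 0, 1, 0, 0],
    ![0, (-1 : ℂ), 1, 0, 0, 0, 0, 0, 0, (-1 : ℂ), 1, 0, 0, 0, 1],
    ![0, (-1 : ℂ), 1, 0, 0, 0, 0, 0, 0, (-1 : ℂ), 1, 0, 0, 0, 1],
    ![0, 0, 0, 1, (-1 : ℂ), 0, (-1 : ℂ), 0, 0, 1, 0, 0, (-1 : ℂ), 0, 0],
    ![0, 1, 0, 0, 0, (-1 : ℂ), 1, 0, 0, 0, 0, 1, 0, (-1 : ℂ), 0],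
    ![0, 0, (-1 : ℂ), 0, 0, 1, 0, 1, (-1 : ℂ), 0, 0, 0, 1, 0, 0],
    ![(-1 : ℂ), 0, 0, 0, 1, 0, 0, (-1 : ℂ), 0, 0, (-1 : ℂ), 0, 0, 1, 0],
    ![1, 0, 0, (-1 : ℂ), 0, 0, 0, 0, 1, 0, 0, (-1 : ℂ), 0, 0, (-1 : ℂ)],
    ![(-1 : ℂ), 0, 0, 0, 1, 0, 0, (-1 : ℂ), 0, 0, (-1 : ℂ), 0, 0, 1, 0],
    ![0, 0, (-1 : ℂ), 0, 0, 1, 0, 1, (-1 : ℂ), 0, 0, 0, 1, 0, 0],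
    ![1, 0, 0, (-1 : ℂ), 0, 0, 0, 0, 1, 0, 0, (-1 : ℂ), 0, 0, (-1 : ℂ)],
    ![0, 0, 0, 1, (-1 : ℂ), 0, (-1 : ℂ), 0, 0, 1, 0, 0, (-1 : ℂ), 0, 0],
    ![0, (-1 : ℂ), 1, 0, 0, 0, 0, 0, 0, (-1 : ℂ), 1, 0, 0, 0, 1],
    ![0, 1, 0, 0, 0, (-1 : ℂ), 1, 0, 0, 0, 0, 1, 0, (-1 : ℂ), 0]]

/-- The symmetric invariant bilinear form on `M`, normalized by
`[[x,y],y] = B(y,y) x - B(x,y) y`; it pairs the weight spaces of opposite weights. -/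
def bform (x y : M7) : ℂ :=
  400 * x 3 * y 3 - 20 * (x 0 * y 6 + x 6 * y 0) + 120 * (x 1 * y 5 + x 5 * y 1)
    - 300 * (x 2 * y 4 + x 4 * y 2)

lemma bform_comm (x y : M7) : bform x y = bform y x := by
  simp only [bform]; ring

lemma bform_br (x y z : M7) : bform (br x y) z = bform x (br y z) := by
  simp [bform, br, dd]; ring

lemma br_anti (x y : M7) : br x y = -br y x := by
  ext k; fin_cases k <;> simp [br, dd] <;> ring

lemma br_add_left (x y z : M7) : br (x + y) z = br x z + br y z := by
  ext k; fin_cases k <;> simp [br, dd] <;> ring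

lemma br_smul_left (t : ℂ) (x z : M7) : br (t • x) z = t • br x z := by
  ext k; fin_cases k <;> simp [br, dd] <;> ring

lemma br_neg_left (x z : M7) : br (-x) z = -br x z := by
  ext k; fin_cases k <;> simp [br, dd] <;> ring

lemma br_neg_right (x z : M7) : br x (-z) = -br x z := by
  ext k; fin_cases k <;> simp [br, dd] <;> ring

/-- The linearization in `y` of `[[x,y],y] = B(y,y) x - B(x,y) y`. -/
lemma br_br_add (x y z : M7) :
    br (br x y) z + br (br x z) y =
      (2 * bform y z) • x + (-bform x y) • z + (-bform x z) • y := by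
  ext k; fin_cases k <;> simp [br, dd, bform] <;> ring

lemma br_br_br_add (x y z w : M7) :
    br (br (br x y) z) w + br (br (br x z) y) w =
      (2 * bform y z) • br x w + (-bform x y) • br z w + (-bform x z) • br y w := by
  rw [← br_add_left, br_br_add]
  simp only [br_add_left, br_smul_left]

lemma bform_br_swap (x y z : M7) : bform (br x y) z = -bform (br x z) y := by
  rw [bform_comm, ← bform_br, br_anti z x]
  simp [bform]; ring

lemma bform_br_rot (x y z : M7) : bform (br x y) z = bform (br z x) y := by
  rw [bform_comm, ← bform_br]

/-- The linearized Malcev identity. -/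
lemma malcev (a b c d : M7) :
    -br (br (br a b) c) d + br (br (br a d) b) c - br (br (br b c) d) a
      - br (br (br c d) a) b + br (br a c) (br b d) = 0 := by
  -- The products of the cubic identity with the fourth variable.
  have h1 := br_br_br_add a b c d
  have h2 := br_br_br_add a b d c
  have h3 := br_br_br_add b a c d
  have h4 := br_br_br_add b a d c
  have h5 := br_br_br_add c a d b
  -- Its instances in which one argument is itself a product.
  have h6 := br_br_add (br a b) c d
  have h7 := br_br_add (br a c) b d
  have h8 := br_br_add (br b c) a d
  have h9 := br_br_add a (br b d) c
  have h10 := br_br_add a (br b c) d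
  have h11 := br_br_add b (br a d) c
  -- Products and forms are brought to a normal form under anticommutativity and invariance of `B`.
  simp only [br_anti a (br _ _), br_anti b (br _ _), br_anti b a, br_anti c a, br_anti c b,
    br_anti d b, br_anti d c, br_anti (br b c) (br a d), br_neg_left, bform_comm a (br _ _),
    bform_comm b (br _ _), bform_comm b a, bform_comm c a, bform_br_swap a c b,
    bform_br_swap a d b, bform_br_swap a d c, bform_br_swap b d c, bform_br_rot b c a,
    bform_br_rot b d a] at *
  linear_combination (norm := module) h1 + (3 / 2 : ℂ) • h2 + (3 / 2 : ℂ) • h3 + h4 - h5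
    - (1 / 2 : ℂ) • h6 - h7 - h8 + h9 + (1 / 2 : ℂ) • h10 + (1 / 2 : ℂ) • h11

lemma Phi17_apply (v : Fin 15 → ℂ) (a b c d : M7) :
    Phi17 v a b c d = ∑ j, v j • mono17 j a b c d := by
  simp [Phi17, LinearMap.sum_apply, Finset.sum_apply]

set_option linter.unusedSimpArgs false in
lemma gens17_mem_ker (i : Fin 24) : gens17 i ∈ LinearMap.ker Phi17 := by
  -- The rows of `gens17` take only six distinct values, given by the permutations fixing `a`.
  have h0 : gens17 0 ∈ LinearMap.ker Phi17 := by
    rw [LinearMap.mem_ker]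
    funext a b c d
    have h := malcev a b c d
    simp [Phi17_apply, Fin.sum_univ_succ, gens17, mono17]
    linear_combination (norm := module) h
  have h1 : gens17 1 ∈ LinearMap.ker Phi17 := by
    rw [LinearMap.mem_ker]
    funext a b c d
    have h := malcev a b d c
    simp only [br_anti c b, br_anti d b, br_anti d c, br_anti (br c d) (br a b),
      br_anti (br b d) (br a c), br_anti (br b c) (br a d), br_neg_left, br_neg_right] at h
    simp [Phi17_apply, Fin.sum_univ_succ, gens17, mono17]
    linear_combination (norm := module) h
  have h2 : gens17 2 ∈ LinearMap.ker Phi17 := by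
    rw [LinearMap.mem_ker]
    funext a b c d
    have h := malcev a c b d
    simp only [br_anti c b, br_anti d b, br_anti d c, br_anti (br c d) (br a b),
      br_anti (br b d) (br a c), br_anti (br b c) (br a d), br_neg_left, br_neg_right] at h
    simp [Phi17_apply, Fin.sum_univ_succ, gens17, mono17]
    linear_combination (norm := module) h
  have h3 : gens17 3 ∈ LinearMap.ker Phi17 := by
    rw [LinearMap.mem_ker]
    funext a b c d
    have h := malcev a c d b
    simp only [br_anti c b, br_anti d b, br_anti d c, br_anti (br c d) (br a b),
      br_anti (br b d) (br a c), br_anti (br b c) (br a d), br_neg_left, br_neg_right] at h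
    simp [Phi17_apply, Fin.sum_univ_succ, gens17, mono17]
    linear_combination (norm := module) h
  have h4 : gens17 4 ∈ LinearMap.ker Phi17 := by
    rw [LinearMap.mem_ker]
    funext a b c d
    have h := malcev a d b c
    simp only [br_anti c b, br_anti d b, br_anti d c, br_anti (br c d) (br a b),
      br_anti (br b d) (br a c), br_anti (br b c) (br a d), br_neg_left, br_neg_right] at h
    simp [Phi17_apply, Fin.sum_univ_succ, gens17, mono17]
    linear_combination (norm := module) h
  have h5 : gens17 5 ∈ LinearMap.ker Phi17 := by
    rw [LinearMap.mem_ker]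
    funext a b c d
    have h := malcev a d c b
    simp only [br_anti c b, br_anti d b, br_anti d c, br_anti (br c d) (br a b),
      br_anti (br b d) (br a c), br_anti (br b c) (br a d), br_neg_left, br_neg_right] at h
    simp [Phi17_apply, Fin.sum_univ_succ, gens17, mono17]
    linear_combination (norm := module) h
  fin_cases i
  exacts [h0, h1, h2, h3, h4, h5, h3, h5, h4, h0, h2, h1, h1, h4, h5, h2, h0, h3, h0, h2, h3, h4,
    h1, h5]

set_option maxHeartbeats 2000000 in
/-- A kernel vector is determined by its coordinates at `m₁₀, m₁₂, m₁₃, m₁₄, m₁₅`, and matching these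
coordinates gives the coefficients of the combination. -/
lemma eq_comb_of_mem_ker {v : Fin 15 → ℂ} (hv : v ∈ LinearMap.ker Phi17) :
    v = v 13 • gens17 0 + (v 14 - v 11) • gens17 1 + (v 12 + v 9 + v 14 - v 11) • gens17 2
      + (-v 11) • gens17 3 + (v 9 + v 14 - v 11) • gens17 4 := by
  have key (a b c d : M7) (k : Fin 7) : ∑ j, v j * mono17 j a b c d k = 0 := by
    have := congrFun (Phi17_apply v a b c d) k
    rw [LinearMap.mem_ker.mp hv] at this
    simpa [Finset.sum_apply] using this.symm
  -- Ten quadruples of basis vectors, with one coordinate each, giving independent equations.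
  have e0 := key (Pi.single 0 1) (Pi.single 3 1) (Pi.single 3 1) (Pi.single 3 1) 0
  have e1 := key (Pi.single 0 1) (Pi.single 3 1) (Pi.single 3 1) (Pi.single 6 1) 3
  have e2 := key (Pi.single 0 1) (Pi.single 3 1) (Pi.single 6 1) (Pi.single 3 1) 3
  have e3 := key (Pi.single 3 1) (Pi.single 0 1) (Pi.single 3 1) (Pi.single 3 1) 0
  have e4 := key (Pi.single 3 1) (Pi.single 0 1) (Pi.single 3 1) (Pi.single 6 1) 3
  have e5 := key (Pi.single 3 1) (Pi.single 3 1) (Pi.single 0 1) (Pi.single 3 1) 0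
  have e6 := key (Pi.single 0 1) (Pi.single 0 1) (Pi.single 4 1) (Pi.single 5 1) 0
  have e7 := key (Pi.single 0 1) (Pi.single 1 1) (Pi.single 2 1) (Pi.single 6 1) 0
  have e8 := key (Pi.single 0 1) (Pi.single 1 1) (Pi.single 5 1) (Pi.single 4 1) 1
  have e9 := key (Pi.single 0 1) (Pi.single 4 1) (Pi.single 0 1) (Pi.single 5 1) 0
  simp [Fin.sum_univ_succ, mono17, br, dd] at e0
  simp [Fin.sum_univ_succ, mono17, br, dd] at e1
  simp [Fin.sum_univ_succ, mono17, br, dd] at e2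
  simp [Fin.sum_univ_succ, mono17, br, dd] at e3
  simp [Fin.sum_univ_succ, mono17, br, dd] at e4
  simp [Fin.sum_univ_succ, mono17, br, dd] at e5
  simp [Fin.sum_univ_succ, mono17, br, dd] at e6
  simp [Fin.sum_univ_succ, mono17, br, dd] at e7
  simp [Fin.sum_univ_succ, mono17, br, dd] at e8
  simp [Fin.sum_univ_succ, mono17, br, dd] at e9
  ext j
  fin_cases j <;> simp [gens17]
  · linear_combination (-1/48000) * e0 + (1/400) * e1 + (1/2400) * e2 + (-1/24000) * e3 + (1/2400) * e4 + (1/48000) * e5 + (1/3600) * e7 + (-1/3600) * e8 + (1/3600) * e9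
  · linear_combination (-1/48000) * e0 + (1/800) * e2 + (-1/24000) * e3 + (1/2400) * e4 + (-1/48000) * e5 + (-1/3600) * e9
  · linear_combination (1/48000) * e0 + (-1/2400) * e2 + (1/24000) * e3 + (-1/2400) * e4 + (-1/48000) * e5 + (-1/3600) * e7 + (1/3600) * e8 + (-1/3600) * e9
  · linear_combination (1/16000) * e0 + (-1/600) * e1 + (-1/800) * e2 + (-1/2400) * e4 + (-1/48000) * e5 + (-1/3600) * e6
  · linear_combination (1/16000) * e0 + (-1/1200) * e1 + (1/2400) * e2 + (1/12000) * e3 + (-1/800) * e4 + (1/48000) * e5 + (1/3600) * e6 + (-1/3600) * e7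
  · linear_combination (1/48000) * e0 + (-1/2400) * e2 + (-1/24000) * e3 + (1/800) * e4 + (1/48000) * e5 + (1/3600) * e7 + (1/3600) * e9
  · linear_combination (-1/24000) * e0 + (1/600) * e1 + (1/1200) * e2 + (1/1200) * e4 + (-1/24000) * e5 + (1/3600) * e6 + (-1/3600) * e8
  · linear_combination (-1/24000) * e0 + (1/1200) * e1 + (1/1200) * e2 + (-1/24000) * e3 + (1/1200) * e4 + (-1/3600) * e6 + (1/3600) * e7 + (1/3600) * e9
  · linear_combination (1/24000) * e0 + (1/12000) * e3 + (-1/1200) * e4 + (1/24000) * e5 + (-1/3600) * e9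
  · linear_combination (1/1200) * e1 + (1/1200) * e4 + (1/24000) * e5 + (-1/3600) * e6

/-- The kernel is spanned by the first five of the 24 vectors. -/
lemma ker_eq_span_five :
    LinearMap.ker Phi17 =
      Submodule.span ℂ (Set.range fun i : Fin 5 => gens17 (Fin.castLE (by norm_num) i)) := by
  apply le_antisymm
  · intro v hv
    rw [eq_comb_of_mem_ker hv]
    have hg (i : Fin 5) := Submodule.subset_span (R := ℂ)
      (Set.mem_range_self (f := fun i : Fin 5 => gens17 (Fin.castLE (by norm_num) i)) i)
    exact add_mem (add_mem (add_mem (add_mem (Submodule.smul_mem _ _ (hg 0))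
      (Submodule.smul_mem _ _ (hg 1))) (Submodule.smul_mem _ _ (hg 2)))
      (Submodule.smul_mem _ _ (hg 3))) (Submodule.smul_mem _ _ (hg 4))
  · rw [Submodule.span_le]
    rintro _ ⟨i, rfl⟩
    exact gens17_mem_ker _

lemma linearIndependent_five :
    LinearIndependent ℂ fun i : Fin 5 => gens17 (Fin.castLE (by norm_num) i) := by
  rw [Fintype.linearIndependent_iff]
  intro g hg
  -- The coordinates `m₁₄, m₂, m₆, m₁₂, m₅` determine the five coefficients successively.
  have h0 := congrFun hg 13
  have h1 := congrFun hg 1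
  have h2 := congrFun hg 5
  have h3 := congrFun hg 11
  have h4 := congrFun hg 4
  simp [Fin.sum_univ_succ, gens17] at h0 h1 h2 h3 h4
  intro i
  fin_cases i
  · exact h0
  · exact h1
  · exact h2
  · exact h3
  · change g 4 = 0
    linear_combination h0 - h4

/-- The space of coefficient vectors `λ ∈ ℂ¹⁵` with `Σ_j λ_j m_j ≡ 0` on `M` has dimension 5
and is spanned by the coefficient vectors of the permutations of the linearized Malcev
identity. -/
theorem degree4_identities_of_M :
    Module.finrank ℂ (LinearMap.ker Phi17) = 5 ∧
    LinearMap.ker Phi17 = Submodule.span ℂ (Set.range gens17) := by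
  constructor
  · rw [ker_eq_span_five, finrank_span_eq_card linearIndependent_five, Fintype.card_fin]
  · apply le_antisymm
    · rw [ker_eq_span_five]
      apply Submodule.span_mono
      rintro _ ⟨i, rfl⟩
      exact Set.mem_range_self _
    · rw [Submodule.span_le]
      rintro _ ⟨i, rfl⟩
      exact gens17_mem_ker i

end
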